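/- arXiv:2502.04272 — 5 statements merged into one kernel-verified Lean document; each statement's English description precedes it below -/
import Mathlib

section
/- (Conze–Le Borgne partition lemma, two-dimensional case) Let μ be a Borel probability measure on [0,1]² and let κ > 0. Then there exists a constant C > 0 such that for every n ∈ ℕ there exist a Borel set Y_n ⊆ [0,1]² and a finite partition 𝒫_n of [0,1]² \ Y_n into Borel sets satisfying: #𝒫_n ≤ e^{2κn}; diam(P) ≤ C e^{−κn} for every P ∈ 𝒫_n; μ(Y_n) ≤ e^{−κn}; and for every P ∈ 𝒫_n one has μ(P) > 0 and there exists a Lipschitz continuous function ρ_P : [0,1]² → [0,∞) with sup ρ_P ≤ C e^{3κn}, Lipschitz constant Lip(ρ_P) ≤ C e^{8κn}, and ∫ |ρ_P − μ(P)^{−1} 1_P| dμ ≤ C e^{−κn}. -/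
/-!
Write `E = e^{κn}`. The cells are those of a rectangular grid with `N = ⌊E⌋` columns and `N` rows,
of mesh at most `2 / N`; cells of measure less than `E⁻³` are discarded into `Y`, which costs at
most `N² E⁻³ ≤ E⁻¹`.

For the densities, the grid lines must carry little mass nearby. With `K = ⌈E⁴⌉`, each coordinate
axis is cut into intervals of length `1 / (K N)`, coloured periodically with `K` colours. By
pigeonhole (`exists_light_colour`) some colour `k` has measure at most `1 / K ≤ E⁻⁴`, and the grid
lines are placed at the left ends of the intervals of colour `k`. Off the resulting strip set `S`,
points of different cells are at distance at least `1 / (K N)` (`gridIndex_separated`), so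
`1_P` agrees off `S` with a `K N`-Lipschitz function `φ` valued in `[0,1]` (`exists_lipschitz_sep`).
Then `ρ_P = μ(P)⁻¹ φ` is bounded by `E³`, has Lipschitz constant at most `E³ K N ≤ 2 E⁸`, and its
`L¹` error is at most `μ(P)⁻¹ μ(S) ≤ 2 E³ E⁻⁴`.
-/

open MeasureTheory Set

/-- The closed unit square in the Euclidean plane. -/
def unitSquare : Set (EuclideanSpace ℝ (Fin 2)) :=
  {v : EuclideanSpace ℝ (Fin 2) | ∀ i, v i ∈ Set.Icc (0:ℝ) 1}

/-- The colour in `{0, …, K - 1}` of the interval `[a / (K N), (a + 1) / (K N))` containing `u`. -/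
noncomputable def colour (N K : ℕ) (u : ℝ) : ℤ := ⌊(K * N : ℝ) * u⌋ % K

/-- The index in `{0, …, N - 1}` of the grid interval containing `u ∈ [0,1]`, the grid points being
the points `(m + k / K) / N` for `m = 0, …, N - 2`. The truncation by `min` merges the last
intervals, so that there are no more than `N` of them. -/
noncomputable def gridIndex (N K : ℕ) (k : ℤ) (u : ℝ) : ℤ :=
  min ((⌊(K * N : ℝ) * u⌋ - k) / K + 1) (N - 1)

lemma measurable_colour (N K : ℕ) : Measurable (colour N K) :=
  (measurable_from_top (f := fun a : ℤ => a % K)).comp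
    (Int.measurable_floor.comp (measurable_const.mul measurable_id))

lemma measurable_gridIndex (N K : ℕ) (k : ℤ) : Measurable (gridIndex N K k) :=
  (measurable_from_top (f := fun a : ℤ => min ((a - k) / K + 1) ((N : ℤ) - 1))).comp
    (Int.measurable_floor.comp (measurable_const.mul measurable_id))

lemma gridIndex_mem {N K : ℕ} {k : ℤ} (hN : 0 < N) (hK : 0 < K)
    (hk : k < K) {u : ℝ} (hu : u ∈ Icc (0 : ℝ) 1) :
    gridIndex N K k u ∈ Finset.Icc (0 : ℤ) (N - 1) := by
  have hfl : 0 ≤ ⌊(K * N : ℝ) * u⌋ := Int.floor_nonneg.2 (mul_nonneg (by positivity) hu.1)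
  have hq : -1 ≤ (⌊(K * N : ℝ) * u⌋ - k) / (K : ℤ) := by
    rw [Int.le_ediv_iff_mul_le (by exact_mod_cast hK)]
    linarith
  rw [Finset.mem_Icc, gridIndex]
  omega

/-- The colour-`k` intervals separate the grid intervals: outside of them, points with different
grid indices are at distance at least `1 / (K N)`. -/
lemma gridIndex_separated {N K : ℕ} {k : ℤ} (hK : 0 < K) {u v : ℝ} (hv : colour N K v ≠ k)
    (hk0 : 0 ≤ k) (hk : k < K)
    (h : gridIndex N K k u < gridIndex N K k v) : 1 ≤ (K * N : ℝ) * (v - u) := by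
  unfold gridIndex at h
  unfold colour at hv
  set a := ⌊(K * N : ℝ) * u⌋ with ha
  set b := ⌊(K * N : ℝ) * v⌋ with hb
  have hK' : (0 : ℤ) < K := by exact_mod_cast hK
  have hlt : (a - k) / (K : ℤ) < (b - k) / (K : ℤ) := by omega
  have hab : a + 2 ≤ b := by
    rw [Int.ediv_lt_iff_lt_mul hK'] at hlt
    have h2 := Int.mul_ediv_add_emod (b - k) K
    have h3 := Int.emod_nonneg (b - k) hK'.ne'
    have h4 : (b - k) % (K : ℤ) ≠ 0 := by
      intro h0
      apply hv
      have h5 : b % (K : ℤ) = k % K :=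
        (Int.modEq_iff_dvd.2 (Int.dvd_of_emod_eq_zero h0)).symm
      rw [h5, Int.emod_eq_of_lt hk0 hk]
    have h6 : 0 < (b - k) % (K : ℤ) := lt_of_le_of_ne h3 (Ne.symm h4)
    rw [mul_comm] at h2
    omega
  have h1 := Int.lt_floor_add_one ((K * N : ℝ) * u)
  have h2 := Int.floor_le ((K * N : ℝ) * v)
  rw [← ha] at h1
  rw [← hb] at h2
  have h3 : (a : ℝ) + 2 ≤ b := by exact_mod_cast hab
  rw [mul_sub]
  linarith

/-- Grid intervals have length at most `2 / N`. -/
lemma gridIndex_length {N K : ℕ} {k : ℤ} (hN : 0 < N) (hK : 0 < K) (hk0 : 0 ≤ k)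
    {u v : ℝ} (hv : v ∈ Icc (0 : ℝ) 1)
    (h : gridIndex N K k u = gridIndex N K k v) : v - u ≤ 2 / N := by
  have hK' : (0 : ℤ) < K := by exact_mod_cast hK
  have hKr : (0 : ℝ) < K := by exact_mod_cast hK
  have hNr : (0 : ℝ) < N := by exact_mod_cast hN
  rw [le_div_iff₀ hNr]
  unfold gridIndex at h
  have a1 := Int.floor_le ((K * N : ℝ) * u)
  have b1 := Int.lt_floor_add_one ((K * N : ℝ) * v)
  set a := ⌊(K * N : ℝ) * u⌋ with ha
  set b := ⌊(K * N : ℝ) * v⌋ with hb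
  have h2 := Int.mul_ediv_add_emod (b - k) K
  have h3 := Int.emod_lt_of_pos (b - k) hK'
  have h4 := Int.mul_ediv_add_emod (a - k) K
  have h5 := Int.emod_nonneg (a - k) hK'.ne'
  rcases lt_or_ge ((a - k) / (K : ℤ) + 1) (N - 1) with hc | hc
  · have he : (a - k) / (K : ℤ) = (b - k) / (K : ℤ) := by omega
    rw [he] at h4
    have hba : b + 1 ≤ a + K := by linarith
    have hba' : (b : ℝ) + 1 ≤ a + K := by exact_mod_cast hba
    have : (K : ℝ) * ((v - u) * N) ≤ K * 2 := by nlinarith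
    exact le_of_mul_le_mul_left this hKr
  · have hge : (K : ℤ) * (N - 2) ≤ a := by
      have : (K : ℤ) * (N - 2) ≤ K * ((a - k) / K) :=
        mul_le_mul_of_nonneg_left (by omega) hK'.le
      linarith
    have hge' : (K : ℝ) * (N - 2) ≤ a := by exact_mod_cast hge
    have h7 : (K : ℝ) * (N - 2) ≤ K * (N * u) := by rw [← mul_assoc]; linarith
    have h8 := le_of_mul_le_mul_left h7 hKr
    nlinarith [hv.2]

/-- Pigeonhole: some colour class of the `i`-th coordinate has measure at most `1 / K`. -/
lemma exists_light_colour (μ : Measure (EuclideanSpace ℝ (Fin 2))) [IsProbabilityMeasure μ]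
    (N K : ℕ) (hK : 0 < K) (i : Fin 2) :
    ∃ k : ℤ, 0 ≤ k ∧ k < K ∧ μ.real {x | colour N K (x i) = k} ≤ 1 / K := by
  have hK' : (0 : ℤ) < K := by exact_mod_cast hK
  have hKr : (0 : ℝ) < K := by exact_mod_cast hK
  by_contra! hcon
  have hmeas : ∀ k : ℤ, MeasurableSet {x : EuclideanSpace ℝ (Fin 2) | colour N K (x i) = k} :=
    fun k => ((measurable_colour N K).comp (by fun_prop :
      Measurable fun x : EuclideanSpace ℝ (Fin 2) => x i)) (measurableSet_singleton k)
  have hsum : ∑ k ∈ Finset.Ico (0 : ℤ) K, μ.real {x | colour N K (x i) = k} ≤ 1 := by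
    rw [← measureReal_biUnion_finset]
    · exact measureReal_le_one
    · intro k _ l _ hkl
      exact Set.disjoint_left.2 fun x hx hx' => hkl (hx.symm.trans hx')
    · exact fun k _ => hmeas k
  have hlt : ∑ _k ∈ Finset.Ico (0 : ℤ) K, (1 / K : ℝ) <
      ∑ k ∈ Finset.Ico (0 : ℤ) K, μ.real {x | colour N K (x i) = k} := by
    apply Finset.sum_lt_sum_of_nonempty
    · exact Finset.nonempty_Ico.2 hK'
    · intro k hk
      rw [Finset.mem_Ico] at hk
      exact hcon k hk.1 hk.2
  simp only [Finset.sum_const, Int.card_Ico, nsmul_eq_mul, sub_zero, Int.toNat_natCast] at hlt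
  rw [mul_one_div_cancel hKr.ne'] at hlt
  linarith

/-- A Lipschitz Urysohn function for two sets at distance at least `1 / L`. -/
lemma exists_lipschitz_sep {X : Type*} [PseudoMetricSpace X] (A B : Set X) (L : NNReal)
    (hAB : ∀ x ∈ A, ∀ y ∈ B, 1 ≤ (L : ℝ) * dist x y) :
    ∃ φ : X → ℝ, (∀ x, 0 ≤ φ x) ∧ (∀ x, φ x ≤ 1) ∧ (∀ x ∈ A, φ x = 1) ∧
      (∀ x ∈ B, φ x = 0) ∧ LipschitzWith L φ := by
  rcases A.eq_empty_or_nonempty with rfl | hA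
  · exact ⟨fun _ => 0, by simp, by simp, by simp, by simp, LipschitzWith.const' 0⟩
  refine ⟨fun x => max (1 - L * Metric.infDist x A) 0, fun x => le_max_right _ _, fun x => ?_,
    fun x hx => ?_, fun x hx => ?_, ?_⟩
  · exact max_le (sub_le_self _ (mul_nonneg L.2 Metric.infDist_nonneg)) zero_le_one
  · simp [Metric.infDist_zero_of_mem hx]
  · apply max_eq_right
    rw [sub_nonpos]
    rcases L.2.eq_or_lt with h0 | hpos
    · obtain ⟨y, hy⟩ := hA
      have := hAB y hy x hx
      have h0' : (L : ℝ) = 0 := h0.symm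
      rw [h0', zero_mul] at this
      linarith
    · have hpos' : (0 : ℝ) < L := hpos
      have : 1 / (L : ℝ) ≤ Metric.infDist x A := by
        rw [Metric.le_infDist hA]
        intro y hy
        rw [div_le_iff₀' hpos', dist_comm]
        exact hAB y hy x hx
      rwa [div_le_iff₀' hpos'] at this
  · apply LipschitzWith.max_const
    apply LipschitzWith.of_dist_le_mul
    intro x y
    have h := (Metric.lipschitz_infDist_pt A).dist_le_mul x y
    rw [Real.dist_eq, abs_sub_comm] at h
    rw [Real.dist_eq, show 1 - (L : ℝ) * Metric.infDist x A - (1 - L * Metric.infDist y A)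
      = L * (Metric.infDist y A - Metric.infDist x A) by ring, abs_mul, abs_of_nonneg L.coe_nonneg]
    exact mul_le_mul_of_nonneg_left (by simpa using h) L.2

/-- The grid cell with index `z`, for grids of offsets `k 0`, `k 1` in the two coordinates. -/
def gridCell (N K : ℕ) (k : Fin 2 → ℤ) (z : ℤ × ℤ) : Set (EuclideanSpace ℝ (Fin 2)) :=
  {x | x ∈ unitSquare ∧ gridIndex N K (k 0) (x 0) = z.1 ∧ gridIndex N K (k 1) (x 1) = z.2}

lemma measurableSet_unitSquare : MeasurableSet unitSquare := by
  unfold unitSquare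
  rw [Set.ofPred_forall]
  exact MeasurableSet.iInter fun i =>
    (by fun_prop : Measurable fun x : EuclideanSpace ℝ (Fin 2) => x i) measurableSet_Icc

lemma measurableSet_gridCell (N K : ℕ) (k : Fin 2 → ℤ) (z : ℤ × ℤ) :
    MeasurableSet (gridCell N K k z) := by
  have h : ∀ (i : Fin 2) (j : ℤ), MeasurableSet
      {x : EuclideanSpace ℝ (Fin 2) | gridIndex N K (k i) (x i) = j} :=
    fun i j => ((measurable_gridIndex N K (k i)).comp (by fun_prop :
      Measurable fun x : EuclideanSpace ℝ (Fin 2) => x i)) (measurableSet_singleton j)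
  exact measurableSet_unitSquare.inter ((h 0 _).inter (h 1 _))

lemma gridCell_disjoint {N K : ℕ} {k : Fin 2 → ℤ} {z w : ℤ × ℤ} (h : z ≠ w) :
    Disjoint (gridCell N K k z) (gridCell N K k w) :=
  Set.disjoint_left.2 fun _ hx hy =>
    h (Prod.ext (hx.2.1.symm.trans hy.2.1) (hx.2.2.symm.trans hy.2.2))

lemma gridCell_diam {N K : ℕ} {k : Fin 2 → ℤ} (hN : 0 < N) (hK : 0 < K) (hk0 : ∀ i, 0 ≤ k i)
    (z : ℤ × ℤ) : Metric.diam (gridCell N K k z) ≤ 4 / N := by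
  have hNr : (0 : ℝ) < N := by exact_mod_cast hN
  apply Metric.diam_le_of_forall_dist_le (by positivity)
  intro x hx y hy
  have key : ∀ i, |x i - y i| ≤ 2 / N := by
    have hi : ∀ i, gridIndex N K (k i) (x i) = gridIndex N K (k i) (y i) := by
      intro i
      fin_cases i
      · exact hx.2.1.trans hy.2.1.symm
      · exact hx.2.2.trans hy.2.2.symm
    intro i
    rw [abs_le']
    constructor
    · exact gridIndex_length hN hK (hk0 i) (hx.1 i) (hi i).symm
    · rw [neg_sub]
      exact gridIndex_length hN hK (hk0 i) (hy.1 i) (hi i)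
  rw [EuclideanSpace.dist_eq]
  apply Real.sqrt_le_iff.2 ⟨by positivity, ?_⟩
  rw [Fin.sum_univ_two, Real.dist_eq, Real.dist_eq]
  have h0 := pow_le_pow_left₀ (abs_nonneg _) (key 0) 2
  have h1 := pow_le_pow_left₀ (abs_nonneg _) (key 1) 2
  have : (4 / N : ℝ) = 2 * (2 / N) := by ring
  rw [this, mul_pow]
  nlinarith [sq_nonneg (2 / N : ℝ)]

/-- Off the strips, distinct cells are at distance at least `1 / (K N)`. -/
lemma gridCell_separated {N K : ℕ} {k : Fin 2 → ℤ} (hK : 0 < K) (hk0 : ∀ i, 0 ≤ k i)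
    (hk : ∀ i, k i < K) {z : ℤ × ℤ} {x y : EuclideanSpace ℝ (Fin 2)}
    (hx : x ∈ gridCell N K k z) (hy : y ∈ unitSquare) (hyz : y ∉ gridCell N K k z)
    (hxS : ∀ i, colour N K (x i) ≠ k i) (hyS : ∀ i, colour N K (y i) ≠ k i) :
    1 ≤ (K * N : ℝ) * dist x y := by
  obtain ⟨i, hi⟩ : ∃ i, gridIndex N K (k i) (x i) ≠ gridIndex N K (k i) (y i) := by
    by_contra! hcon
    exact hyz ⟨hy, (hcon 0).symm.trans hx.2.1, (hcon 1).symm.trans hx.2.2⟩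
  have hd : |x i - y i| ≤ dist x y := by
    have := PiLp.norm_apply_le (x - y) i
    rwa [← dist_eq_norm, PiLp.sub_apply, Real.norm_eq_abs] at this
  have hKN : (0 : ℝ) ≤ K * N := by positivity
  refine le_trans ?_ (mul_le_mul_of_nonneg_left hd hKN)
  rcases lt_or_gt_of_ne hi with h | h
  · refine (gridIndex_separated hK (hyS i) (hk0 i) (hk i) h).trans ?_
    exact mul_le_mul_of_nonneg_left (by rw [abs_sub_comm]; exact le_abs_self _) hKN
  · refine (gridIndex_separated hK (hxS i) (hk0 i) (hk i) h).trans ?_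
    exact mul_le_mul_of_nonneg_left (le_abs_self _) hKN

/-- The density of a cell `p`: a Lipschitz function that agrees with `μ(p)⁻¹ 1_p` off `S`. -/
lemma exists_density (μ : Measure (EuclideanSpace ℝ (Fin 2))) [IsProbabilityMeasure μ]
    (hμQ : μ unitSquare = 1) {p S : Set (EuclideanSpace ℝ (Fin 2))} (hS : MeasurableSet S)
    {m s : ℝ} {L : NNReal} (hm : 0 < m) (hpm : m⁻¹ ≤ μ.real p) (hs : μ.real S ≤ s)
    (hsep : ∀ x ∈ p \ S, ∀ y ∈ unitSquare \ S, y ∉ p → 1 ≤ (L : ℝ) * dist x y) :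
    ∃ ρ : EuclideanSpace ℝ (Fin 2) → ℝ, (∀ x, 0 ≤ ρ x) ∧ (∀ x, ρ x ≤ m) ∧
      LipschitzWith (Real.toNNReal (m * L)) ρ ∧
      ∫ x, |ρ x - (μ.real p)⁻¹ * p.indicator (fun _ => (1:ℝ)) x| ∂μ ≤ m * s := by
  obtain ⟨φ, h0, h1, hA, hB, hL⟩ := exists_lipschitz_sep (p \ S) ((unitSquare \ S) \ p) L
    fun x hx y hy => hsep x hx y hy.1 hy.2
  have hp : 0 < μ.real p := (inv_pos.2 hm).trans_le hpm
  have hinv : (μ.real p)⁻¹ ≤ m := inv_le_of_inv_le₀ hm hpm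
  have hinv0 : 0 ≤ (μ.real p)⁻¹ := inv_nonneg.2 hp.le
  refine ⟨fun x => (μ.real p)⁻¹ * φ x, fun x => mul_nonneg hinv0 (h0 x), fun x => ?_, ?_, ?_⟩
  · calc (μ.real p)⁻¹ * φ x ≤ m * 1 := mul_le_mul hinv (h1 x) (h0 x) hm.le
      _ = m := mul_one m
  · apply LipschitzWith.of_dist_le_mul
    intro x y
    rw [Real.coe_toNNReal _ (mul_nonneg hm.le L.coe_nonneg), Real.dist_eq, ← mul_sub, abs_mul,
      abs_of_nonneg hinv0, mul_assoc]
    exact mul_le_mul hinv (by simpa [Real.dist_eq] using hL.dist_le_mul x y) (abs_nonneg _) hm.le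
  · have hQ : ∀ᵐ x ∂μ, x ∈ unitSquare :=
      (mem_ae_iff_prob_eq_one measurableSet_unitSquare).2 hμQ
    calc ∫ x, |(μ.real p)⁻¹ * φ x - (μ.real p)⁻¹ * p.indicator (fun _ => (1:ℝ)) x| ∂μ
        ≤ ∫ x, S.indicator (fun _ => m) x ∂μ := by
          apply integral_mono_of_nonneg (Filter.Eventually.of_forall fun x => abs_nonneg _)
          · exact (integrable_const m).indicator hS
          · filter_upwards [hQ] with x hxQ
            rw [← mul_sub, abs_mul, abs_of_nonneg hinv0]
            by_cases hxS : x ∈ S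
            · rw [indicator_of_mem hxS]
              refine (mul_le_mul hinv ?_ (abs_nonneg _) hm.le).trans (mul_one m).le
              have := h0 x
              have := h1 x
              by_cases hxp : x ∈ p
              · rw [indicator_of_mem hxp, abs_le]
                constructor <;> linarith
              · rw [indicator_of_notMem hxp, abs_le]
                constructor <;> linarith
            · rw [indicator_of_notMem hxS]
              by_cases hxp : x ∈ p
              · simp [hxp, hA x ⟨hxp, hxS⟩]
              · simp [hxp, hB x ⟨⟨hxQ, hxS⟩, hxp⟩]
      _ = μ.real S * m := by rw [integral_indicator_const _ hS, smul_eq_mul]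
      _ ≤ m * s := by rw [mul_comm]; exact mul_le_mul_of_nonneg_left hs hm.le

/-- **Conze–Le Borgne partition lemma** (two-dimensional case,
Lemma `lem:partition`): for a Borel probability measure `μ` on `[0,1]²` and
`κ > 0`, there are sets `Y_n` of measure `≤ e^{−κn}` and partitions `𝒫_n` of
`[0,1]² \ Y_n` with at most `e^{2κn}` cells of diameter `≤ C e^{−κn}`, each cell
of positive measure and admitting a Lipschitz density `ρ_P` approximating
`μ(P)⁻¹ 1_P` in `L¹(μ)` up to `C e^{−κn}`. -/
theorem conze_le_borgne_partition
    (μ : Measure (EuclideanSpace ℝ (Fin 2))) [IsProbabilityMeasure μ]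
    (hμQ : μ unitSquare = 1) (κ : ℝ) (hκ : 0 < κ) :
    ∃ C : ℝ, 0 < C ∧ ∀ n : ℕ,
      ∃ (Y : Set (EuclideanSpace ℝ (Fin 2)))
        (P : Finset (Set (EuclideanSpace ℝ (Fin 2)))),
        MeasurableSet Y ∧ Y ⊆ unitSquare ∧
        (∀ p ∈ P, MeasurableSet p) ∧
        (∀ p ∈ P, ∀ q ∈ P, p ≠ q → Disjoint p q) ∧
        (⋃ p ∈ P, p) = unitSquare \ Y ∧
        (P.card : ℝ) ≤ Real.exp (2 * κ * n) ∧
        (∀ p ∈ P, Metric.diam p ≤ C * Real.exp (-κ * n)) ∧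
        (μ Y).toReal ≤ Real.exp (-κ * n) ∧
        ∀ p ∈ P, 0 < (μ p).toReal ∧
          ∃ ρ : EuclideanSpace ℝ (Fin 2) → ℝ,
            (∀ x, 0 ≤ ρ x) ∧
            (∀ x, ρ x ≤ C * Real.exp (3 * κ * n)) ∧
            LipschitzWith (Real.toNNReal (C * Real.exp (8 * κ * n))) ρ ∧
            ∫ x, |ρ x - ((μ p).toReal)⁻¹ * p.indicator (fun _ => (1:ℝ)) x| ∂μ
              ≤ C * Real.exp (-κ * n) := by
  refine ⟨8, by norm_num, fun n => ?_⟩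
  obtain ⟨E, hE⟩ : ∃ E, E = Real.exp (κ * n) := ⟨_, rfl⟩
  have hE1 : 1 ≤ E := hE ▸ Real.one_le_exp (by positivity)
  have hE0 : 0 < E := by linarith
  have e2 : Real.exp (2 * κ * n) = E ^ 2 := by
    rw [hE, ← Real.exp_nat_mul]; congr 1; push_cast; ring
  have e3 : Real.exp (3 * κ * n) = E ^ 3 := by
    rw [hE, ← Real.exp_nat_mul]; congr 1; push_cast; ring
  have e8 : Real.exp (8 * κ * n) = E ^ 8 := by
    rw [hE, ← Real.exp_nat_mul]; congr 1; push_cast; ring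
  have e1 : Real.exp (-κ * n) = E⁻¹ := by
    rw [hE, ← Real.exp_neg]; congr 1; ring
  rw [e1, e2, e3, e8]
  obtain ⟨N, hNdef⟩ : ∃ N, N = ⌊E⌋₊ := ⟨_, rfl⟩
  obtain ⟨K, hKdef⟩ : ∃ K, K = ⌈E ^ 4⌉₊ := ⟨_, rfl⟩
  have hN : 0 < N := hNdef ▸ Nat.floor_pos.2 hE1
  have hN1 : (1 : ℝ) ≤ N := by exact_mod_cast hN
  have hNE : (N : ℝ) ≤ E := hNdef ▸ Nat.floor_le hE0.le
  have hEN : E ≤ 2 * N := by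
    have := Nat.lt_floor_add_one E
    rw [← hNdef] at this
    linarith
  have hE4 : 1 ≤ E ^ 4 := one_le_pow₀ hE1
  have hK : 0 < K := hKdef ▸ Nat.ceil_pos.2 (by positivity)
  have hEK : E ^ 4 ≤ K := hKdef ▸ Nat.le_ceil _
  have hKE : (K : ℝ) ≤ 2 * E ^ 4 := by
    have := Nat.ceil_lt_add_one (by positivity : 0 ≤ E ^ 4)
    rw [← hKdef] at this
    linarith
  choose k hk0 hk hkμ using exists_light_colour μ N K hK
  -- `S` is the union of the vertical and horizontal strips along the grid lines.
  obtain ⟨S, hSdef⟩ : ∃ S : Set (EuclideanSpace ℝ (Fin 2)),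
    S = ⋃ i, {x | colour N K (x i) = k i} := ⟨_, rfl⟩
  have hSmeas : MeasurableSet S := by
    rw [hSdef]
    exact MeasurableSet.iUnion fun i => ((measurable_colour N K).comp (by fun_prop :
      Measurable fun x : EuclideanSpace ℝ (Fin 2) => x i)) (measurableSet_singleton _)
  have hSμ : μ.real S ≤ 2 * (E ^ 4)⁻¹ := by
    have hle : μ.real S ≤ ∑ i, μ.real {x | colour N K (x i) = k i} :=
      hSdef ▸ measureReal_iUnion_fintype_le _
    have hKinv : (1 / K : ℝ) ≤ (E ^ 4)⁻¹ := by
      rw [one_div]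
      exact inv_anti₀ (by positivity) hEK
    rw [Fin.sum_univ_two] at hle
    linarith [hkμ 0, hkμ 1]
  have hSnot : ∀ x ∉ S, ∀ i, colour N K (x i) ≠ k i := by
    intro x hx i hi
    exact hx (hSdef ▸ mem_iUnion.2 ⟨i, hi⟩)
  classical
  set I : Finset (ℤ × ℤ) := Finset.Icc (0 : ℤ) (N - 1) ×ˢ Finset.Icc (0 : ℤ) (N - 1) with hI
  have hIcard : (I.card : ℝ) ≤ E ^ 2 := by
    have : I.card = N ^ 2 := by
      rw [hI, Finset.card_product, Int.card_Icc, sub_add_cancel, sub_zero, Int.toNat_natCast, sq]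
    rw [this]
    push_cast
    exact pow_le_pow_left₀ (by positivity) hNE 2
  set G := I.filter fun z => (E ^ 3)⁻¹ ≤ μ.real (gridCell N K k z) with hG
  set B := I.filter fun z => ¬ (E ^ 3)⁻¹ ≤ μ.real (gridCell N K k z) with hB
  have hcover : ∀ x ∈ unitSquare, ∃ z ∈ I, x ∈ gridCell N K k z := fun x hx =>
    ⟨(gridIndex N K (k 0) (x 0), gridIndex N K (k 1) (x 1)),
      Finset.mem_product.2 ⟨gridIndex_mem hN hK (hk 0) (hx 0), gridIndex_mem hN hK (hk 1) (hx 1)⟩,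
      hx, rfl, rfl⟩
  refine ⟨⋃ z ∈ B, gridCell N K k z, G.image (gridCell N K k), ?_, ?_, ?_, ?_, ?_, ?_, ?_, ?_, ?_⟩
  · exact Finset.measurableSet_biUnion _ fun z _ => measurableSet_gridCell N K k z
  · exact iUnion₂_subset fun z _ x hx => hx.1
  · simp only [Finset.forall_mem_image]
    exact fun z _ => measurableSet_gridCell N K k z
  · simp only [Finset.forall_mem_image]
    exact fun z _ w _ hzw => gridCell_disjoint fun h => hzw (h ▸ rfl)
  · ext x
    simp only [Finset.mem_image, iUnion_exists, biUnion_and', iUnion_iUnion_eq_right, mem_iUnion,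
      mem_sdiff, exists_prop, not_exists, not_and]
    constructor
    · rintro ⟨z, hz, hx⟩
      refine ⟨hx.1, fun w hw hxw => ?_⟩
      have hzw : z = w := by
        by_contra hne
        exact Set.disjoint_left.1 (gridCell_disjoint hne) hx hxw
      exact (Finset.mem_filter.1 hw).2 (hzw ▸ (Finset.mem_filter.1 hz).2)
    · rintro ⟨hx, hxB⟩
      obtain ⟨z, hz, hxz⟩ := hcover x hx
      refine ⟨z, Finset.mem_filter.2 ⟨hz, ?_⟩, hxz⟩
      by_contra hcon
      exact hxB z (Finset.mem_filter.2 ⟨hz, hcon⟩) hxz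
  · refine le_trans ?_ hIcard
    exact_mod_cast Finset.card_image_le.trans (Finset.card_filter_le _ _)
  · simp only [Finset.forall_mem_image]
    intro z _
    refine (gridCell_diam hN hK hk0 z).trans ?_
    rw [div_le_iff₀ (by linarith), mul_assoc, inv_mul_eq_div, mul_div_assoc', le_div_iff₀ hE0]
    linarith
  · calc μ.real (⋃ z ∈ B, gridCell N K k z)
        ≤ ∑ z ∈ B, μ.real (gridCell N K k z) := measureReal_biUnion_finset_le _ _
      _ ≤ B.card • (E ^ 3)⁻¹ :=
          Finset.sum_le_card_nsmul _ _ _ fun z hz => (not_le.1 (Finset.mem_filter.1 hz).2).le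
      _ ≤ E ^ 2 * (E ^ 3)⁻¹ := by
          rw [nsmul_eq_mul]
          refine mul_le_mul_of_nonneg_right (le_trans ?_ hIcard) (by positivity)
          exact_mod_cast Finset.card_filter_le _ _
      _ = E⁻¹ := by field_simp
  · simp only [Finset.forall_mem_image]
    intro z hz
    have hzμ := (Finset.mem_filter.1 hz).2
    refine ⟨lt_of_lt_of_le (by positivity) hzμ, ?_⟩
    obtain ⟨ρ, h0, hm, hL, hint⟩ := exists_density μ hμQ hSmeas (L := (K * N : NNReal))
      (by positivity : 0 < E ^ 3) hzμ hSμ (fun x hx y hy hyz => by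
        simpa using gridCell_separated hK hk0 hk hx.1 hy.1 hyz (hSnot x hx.2) (hSnot y hy.2))
    refine ⟨ρ, h0, fun x => (hm x).trans ?_, hL.weaken (Real.toNNReal_le_toNNReal ?_),
      hint.trans ?_⟩
    · linarith [pow_pos hE0 3]
    · push_cast
      calc E ^ 3 * (K * N : ℝ) ≤ E ^ 3 * ((2 * E ^ 4) * E) := by gcongr
        _ = 2 * E ^ 8 := by ring
        _ ≤ 8 * E ^ 8 := by linarith [pow_pos hE0 8]
    · calc E ^ 3 * (2 * (E ^ 4)⁻¹) = 2 * E⁻¹ := by field_simp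
        _ ≤ 8 * E⁻¹ := by linarith [inv_pos.2 hE0]
end

section
/- Let (X, d) be a compact metric space, T : X → X Lipschitz with Lipschitz constant L ≥ 1, and μ a T-invariant Borel probability measure. Assume two-fold exponential decay of correlations for Lipschitz observables: there exist C, τ > 0 such that |∫ φ · (ψ∘T^n) dμ − ∫φ dμ ∫ψ dμ| ≤ C ‖φ‖_Lip ‖ψ‖_Lip e^{−τn} for all Lipschitz φ, ψ : X → ℝ and all n ≥ 1. Then for every σ ∈ (0,1] with σ log L < τ, setting τ' = τ − σ log L, there exists C' > 0 such that for all Lipschitz φ₁, φ₂, φ₃ : X → ℝ and all integers 1 ≤ k ≤ σl: |∫ φ₁ · (φ₂∘T^k) · (φ₃∘T^{k+l}) dμ − ∫ φ₁ · (φ₂∘T^k) dμ · ∫ φ₃ dμ| ≤ C' ‖φ₁‖_Lip ‖φ₂‖_Lip ‖φ₃‖_Lip e^{−τ' l}. -/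
/-!
The estimate follows from a single application of two-fold decay, to the pair
`φ₁ · (φ₂ ∘ T^k)` and `φ₃` at time `k + l`. By the product rule and
`Lip(φ₂ ∘ T^k) ≤ Lip(φ₂) L^k`, the first observable has Lipschitz norm at most
`L^k ‖φ₁‖_Lip ‖φ₂‖_Lip` (`lipNorm_mul_iterate_le`). Since `k ≤ σ l`, the loss `L^k` is at most
`exp (σ l log L)`, while `exp (-τ (k + l)) ≤ exp (-τ l)`; hence the rate `τ - σ log L`, and
`C' = C` works.
-/

open MeasureTheory Set

/-- The supremum norm `sup |f|`. -/
noncomputable def supNorm {X : Type*} (f : X → ℝ) : ℝ := ⨆ x, |f x|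

/-- The optimal Lipschitz constant of `f`. -/
noncomputable def lipConst {X : Type*} [PseudoMetricSpace X] (f : X → ℝ) : ℝ :=
  sInf {K : ℝ | 0 ≤ K ∧ LipschitzWith (Real.toNNReal K) f}

/-- The Lipschitz norm `‖f‖_Lip = sup |f| + Lip(f)`. -/
noncomputable def lipNorm {X : Type*} [PseudoMetricSpace X] (f : X → ℝ) : ℝ :=
  supNorm f + lipConst f

lemma supNorm_nonneg {X : Type*} (f : X → ℝ) : 0 ≤ supNorm f :=
  Real.iSup_nonneg fun _ => abs_nonneg _

lemma lipConst_nonneg {X : Type*} [PseudoMetricSpace X] (f : X → ℝ) : 0 ≤ lipConst f :=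
  Real.sInf_nonneg fun _ hK => hK.1

lemma lipNorm_nonneg {X : Type*} [PseudoMetricSpace X] (f : X → ℝ) : 0 ≤ lipNorm f :=
  add_nonneg (supNorm_nonneg f) (lipConst_nonneg f)

/-- Compactness makes the supremum in `supNorm` a genuine one. -/
lemma abs_le_supNorm {X : Type*} [PseudoMetricSpace X] [CompactSpace X] {f : X → ℝ}
    (hf : ∃ K, LipschitzWith K f) (x : X) : |f x| ≤ supNorm f := by
  obtain ⟨K, hK⟩ := hf
  exact le_ciSup (isCompact_range hK.continuous.abs).bddAbove x

/-- The infimum defining `lipConst` is attained. -/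
lemma abs_sub_le_lipConst {X : Type*} [PseudoMetricSpace X] {f : X → ℝ}
    (hf : ∃ K, LipschitzWith K f) (x y : X) : |f x - f y| ≤ lipConst f * dist x y := by
  obtain ⟨K, hK⟩ := hf
  rcases (dist_nonneg (x := x) (y := y)).eq_or_lt with h | h
  · have := hK.dist_le_mul x y
    rw [← h, mul_zero, Real.dist_eq] at this
    rwa [← h, mul_zero]
  · rw [← div_le_iff₀ h]
    refine le_csInf ⟨K, K.2, by simpa using hK⟩ ?_
    rintro M ⟨hM, hMf⟩
    have := hMf.dist_le_mul x y
    rw [Real.coe_toNNReal M hM, Real.dist_eq] at this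
    rwa [div_le_iff₀ h]

lemma lipschitzWith_of_abs_sub_le {X : Type*} [PseudoMetricSpace X] {f : X → ℝ} {K : ℝ}
    (hK : 0 ≤ K) (hLip : ∀ x y, |f x - f y| ≤ K * dist x y) :
    LipschitzWith (Real.toNNReal K) f :=
  LipschitzWith.of_dist_le_mul fun x y => by
    rw [Real.coe_toNNReal K hK, Real.dist_eq]
    exact hLip x y

lemma lipNorm_le {X : Type*} [PseudoMetricSpace X] [Nonempty X] {f : X → ℝ} {A K : ℝ}
    (hK : 0 ≤ K) (hA : ∀ x, |f x| ≤ A) (hLip : ∀ x y, |f x - f y| ≤ K * dist x y) :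
    lipNorm f ≤ A + K :=
  add_le_add (ciSup_le hA)
    (csInf_le ⟨0, fun _ hM => hM.1⟩ ⟨hK, lipschitzWith_of_abs_sub_le hK hLip⟩)

/-- The product rule for the increments of `f · (g ∘ T^k)`. -/
lemma abs_sub_mul_iterate_le {X : Type*} [PseudoMetricSpace X] [CompactSpace X]
    {T : X → X} {L : ℝ} (hL : 1 ≤ L) (hT : LipschitzWith (Real.toNNReal L) T) {f g : X → ℝ}
    (hf : ∃ K, LipschitzWith K f) (hg : ∃ K, LipschitzWith K g) (k : ℕ) (x y : X) :
    |f x * g (T^[k] x) - f y * g (T^[k] y)|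
      ≤ (supNorm f * (lipConst g * L ^ k) + lipConst f * supNorm g) * dist x y := by
  have hTk : dist (T^[k] x) (T^[k] y) ≤ L ^ k * dist x y := by
    have := (hT.iterate k).dist_le_mul x y
    rwa [NNReal.coe_pow, Real.coe_toNNReal L (by linarith)] at this
  have hgk : |g (T^[k] x) - g (T^[k] y)| ≤ lipConst g * (L ^ k * dist x y) :=
    (abs_sub_le_lipConst hg _ _).trans (mul_le_mul_of_nonneg_left hTk (lipConst_nonneg g))
  calc |f x * g (T^[k] x) - f y * g (T^[k] y)|
      = |f x * (g (T^[k] x) - g (T^[k] y)) + (f x - f y) * g (T^[k] y)| := by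
        congr 1; ring
    _ ≤ |f x| * |g (T^[k] x) - g (T^[k] y)| + |f x - f y| * |g (T^[k] y)| := by
        rw [← abs_mul, ← abs_mul]; exact abs_add_le _ _
    _ ≤ supNorm f * (lipConst g * (L ^ k * dist x y))
          + (lipConst f * dist x y) * supNorm g :=
        add_le_add
          (mul_le_mul (abs_le_supNorm hf x) hgk (abs_nonneg _) (supNorm_nonneg f))
          (mul_le_mul (abs_sub_le_lipConst hf x y) (abs_le_supNorm hg _) (abs_nonneg _)
            (mul_nonneg (lipConst_nonneg f) dist_nonneg))
    _ = _ := by ring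

lemma lipNorm_mul_iterate_le {X : Type*} [PseudoMetricSpace X] [CompactSpace X] [Nonempty X]
    {T : X → X} {L : ℝ} (hL : 1 ≤ L) (hT : LipschitzWith (Real.toNNReal L) T) {f g : X → ℝ}
    (hf : ∃ K, LipschitzWith K f) (hg : ∃ K, LipschitzWith K g) (k : ℕ) :
    (∃ K, LipschitzWith K fun x => f x * g (T^[k] x)) ∧
      lipNorm (fun x => f x * g (T^[k] x)) ≤ L ^ k * (lipNorm f * lipNorm g) := by
  have hLk : 1 ≤ L ^ k := one_le_pow₀ hL
  have hLk0 : 0 ≤ L ^ k := zero_le_one.trans hLk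
  have sf := supNorm_nonneg f
  have sg := supNorm_nonneg g
  have lf := lipConst_nonneg f
  have lg := lipConst_nonneg g
  have hK : 0 ≤ supNorm f * (lipConst g * L ^ k) + lipConst f * supNorm g := by positivity
  have hinc := abs_sub_mul_iterate_le hL hT hf hg k
  refine ⟨⟨_, lipschitzWith_of_abs_sub_le hK hinc⟩, ?_⟩
  have hsup : ∀ x, |f x * g (T^[k] x)| ≤ supNorm f * supNorm g := fun x => by
    rw [abs_mul]
    exact mul_le_mul (abs_le_supNorm hf x) (abs_le_supNorm hg _) (abs_nonneg _) sf
  refine (lipNorm_le hK hsup hinc).trans ?_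
  have h1 := mul_le_mul_of_nonneg_right hLk (mul_nonneg sf sg)
  have h2 := mul_le_mul_of_nonneg_right hLk (mul_nonneg lf sg)
  have h3 : 0 ≤ L ^ k * (lipConst f * lipConst g) := by positivity
  unfold lipNorm
  linarith

/-- The only place where `k ≤ σ l` enters: it trades the loss `L^k` for part of the rate. -/
lemma pow_mul_exp_le {L τ σ : ℝ} (hL : 1 ≤ L) (hτ : 0 < τ) {k l : ℕ} (hkl : (k : ℝ) ≤ σ * l) :
    L ^ k * Real.exp (-τ * (k + l : ℕ)) ≤ Real.exp (-(τ - σ * Real.log L) * l) := by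
  have hpow : L ^ k = Real.exp (k * Real.log L) := by
    rw [Real.exp_nat_mul, Real.exp_log (by linarith)]
  rw [hpow, ← Real.exp_add, Real.exp_le_exp]
  have h1 := mul_le_mul_of_nonneg_right hkl (Real.log_nonneg hL)
  have h2 : 0 ≤ τ * (k : ℝ) := by positivity
  push_cast
  linarith

/-- From two-fold exponential decay of correlations for Lipschitz observables one
obtains the partial three-fold decorrelation estimate `eq:doc:partial` for
`k ≤ σ l`, with rate `τ' = τ − σ log L`. -/
theorem twofold_implies_partial_threefold
    {X : Type*} [MetricSpace X] [CompactSpace X] [MeasurableSpace X] [BorelSpace X]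
    (T : X → X) (L : ℝ) (hL : 1 ≤ L) (hTlip : LipschitzWith (Real.toNNReal L) T)
    (μ : Measure X) [IsProbabilityMeasure μ]
    (hinv : ∀ s : Set X, MeasurableSet s → μ (T ⁻¹' s) = μ s)
    (C τ : ℝ) (hC : 0 < C) (hτ : 0 < τ)
    (hdoc : ∀ φ ψ : X → ℝ, (∃ K, LipschitzWith K φ) → (∃ K, LipschitzWith K ψ) →
      ∀ n : ℕ, 1 ≤ n →
        |∫ x, φ x * ψ (T^[n] x) ∂μ - (∫ x, φ x ∂μ) * ∫ x, ψ x ∂μ|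
          ≤ C * lipNorm φ * lipNorm ψ * Real.exp (-τ * n))
    (σ : ℝ) (hσ : σ ∈ Set.Ioc (0:ℝ) 1) (hστ : σ * Real.log L < τ) :
    ∃ C' : ℝ, 0 < C' ∧
      ∀ φ₁ φ₂ φ₃ : X → ℝ,
        (∃ K, LipschitzWith K φ₁) → (∃ K, LipschitzWith K φ₂) →
        (∃ K, LipschitzWith K φ₃) →
        ∀ k l : ℕ, 1 ≤ k → (k : ℝ) ≤ σ * l →
          |∫ x, φ₁ x * φ₂ (T^[k] x) * φ₃ (T^[k + l] x) ∂μ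
              - (∫ x, φ₁ x * φ₂ (T^[k] x) ∂μ) * ∫ x, φ₃ x ∂μ|
            ≤ C' * lipNorm φ₁ * lipNorm φ₂ * lipNorm φ₃
              * Real.exp (-(τ - σ * Real.log L) * l) := by
  refine ⟨C, hC, fun φ₁ φ₂ φ₃ h₁ h₂ h₃ k l hk hkl => ?_⟩
  -- `X` is nonempty because it carries a probability measure.
  have : Nonempty X := nonempty_of_isProbabilityMeasure μ
  obtain ⟨hprod, hnorm⟩ := lipNorm_mul_iterate_le hL hTlip h₁ h₂ k
  have n₁ := lipNorm_nonneg φ₁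
  have n₂ := lipNorm_nonneg φ₂
  have n₃ := lipNorm_nonneg φ₃
  calc _ ≤ C * lipNorm (fun x => φ₁ x * φ₂ (T^[k] x)) * lipNorm φ₃
          * Real.exp (-τ * (k + l : ℕ)) := hdoc _ φ₃ hprod h₃ (k + l) (by omega)
    _ ≤ C * (L ^ k * (lipNorm φ₁ * lipNorm φ₂)) * lipNorm φ₃
          * Real.exp (-τ * (k + l : ℕ)) := by gcongr
    _ = C * lipNorm φ₁ * lipNorm φ₂ * lipNorm φ₃
          * (L ^ k * Real.exp (-τ * (k + l : ℕ))) := by ring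
    _ ≤ _ := mul_le_mul_of_nonneg_left (pow_mul_exp_le hL hτ hkl) (by positivity)
end

section
/- Let a < b be reals, let S : [a, b] → ℝ be differentiable with S'(x) ≥ 3 for all x ∈ [a, b], and suppose there is p ∈ (a, b) with S(p) = p. Let r : ℝ → [0,∞) be 1-Lipschitz and suppose a − S(a) = r(a) and S(b) − b = r(b) (so S(a) < a and S(b) > b). Then d(a, p) ≤ r(p), d(S(a), p) ≤ r(a) + r(p), and the image of the open interval, S((a, b)) = (S(a), S(b)), is contained in B(a, r(a)) ∪ B(p, r(p)) ∪ B(b, r(b)), where B(x, r) = (x − r, x + r) denotes the open ball in ℝ. -/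
open Set

/-!
By the mean value inequality, `S y - S x ≥ 3 (y - x)` for `x ≤ y` in `[a, b]`. With `S p = p` this
gives `r a ≥ 2 (p - a)` and `r b ≥ 2 (b - p)`, and the Lipschitz bound then gives `r p ≥ p - a` and
`r p ≥ b - p`. Hence the middle ball contains `(a, b)`, while the outer balls, whose radii reach
exactly to `S a` and `S b`, contain `(S a, a]` and `[b, S b)`. Strict monotonicity and the
intermediate value theorem identify the image of `(a, b)`.
-/

/-- The mean value inequality with one-sided derivatives allowed at the endpoints. -/
theorem expansion_of_deriv_ge_three {a b : ℝ} {S S' : ℝ → ℝ}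
    (hS : ∀ x ∈ Set.Icc a b, HasDerivWithinAt S (S' x) (Set.Icc a b) x)
    (hS3 : ∀ x ∈ Set.Icc a b, 3 ≤ S' x) :
    ∀ x ∈ Set.Icc a b, ∀ y ∈ Set.Icc a b, x ≤ y → 3 * (y - x) ≤ S y - S x := by
  have hd : ∀ x ∈ interior (Set.Icc a b), HasDerivAt S (S' x) x := fun x hx =>
    (hS x (interior_subset hx)).hasDerivAt (mem_interior_iff_mem_nhds.mp hx)
  refine (convex_Icc a b).mul_sub_le_image_sub_of_le_deriv
    (fun x hx => (hS x hx).continuousWithinAt)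
    (fun x hx => (hd x hx).differentiableAt.differentiableWithinAt) fun x hx => ?_
  rw [(hd x hx).deriv]
  exact hS3 x (interior_subset hx)

/-- Geometric covering step (`T' > 0` case of Lemma 5.1 / `lem:srt:interval`):
the image of the recurrence interval `(a,b)` under the expanding fixed-point map `S`
is covered by the three balls `B(a, r(a)) ∪ B(p, r(p)) ∪ B(b, r(b))`. -/
theorem three_balls_cover
    (a b : ℝ) (hab : a < b) (S S' : ℝ → ℝ)
    (hS : ∀ x ∈ Set.Icc a b, HasDerivWithinAt S (S' x) (Set.Icc a b) x)
    (hS3 : ∀ x ∈ Set.Icc a b, 3 ≤ S' x)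
    (p : ℝ) (hp : p ∈ Set.Ioo a b) (hfix : S p = p)
    (r : ℝ → ℝ) (hrnn : ∀ x, 0 ≤ r x) (hrlip : LipschitzWith 1 r)
    (hra : a - S a = r a) (hrb : S b - b = r b) :
    |a - p| ≤ r p ∧ |S a - p| ≤ r a + r p ∧
      S '' Set.Ioo a b = Set.Ioo (S a) (S b) ∧
      S '' Set.Ioo a b ⊆
        Metric.ball a (r a) ∪ Metric.ball p (r p) ∪ Metric.ball b (r b) := by
  have hexp := expansion_of_deriv_ge_three hS hS3
  obtain ⟨hap, hpb⟩ := hp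
  have ha : a ∈ Set.Icc a b := ⟨le_rfl, hab.le⟩
  have hb : b ∈ Set.Icc a b := ⟨hab.le, le_rfl⟩
  have hpm : p ∈ Set.Icc a b := ⟨hap.le, hpb.le⟩
  have h1 := hexp a ha p hpm hap.le
  have h2 := hexp p hpm b hb hpb.le
  have hlip : ∀ x y, |r x - r y| ≤ |x - y| := fun x y => by
    simpa [Real.dist_eq] using hrlip.dist_le_mul x y
  have l1 := (le_abs_self _).trans (hlip a p)
  have l2 := (le_abs_self _).trans (hlip b p)
  rw [abs_of_neg (by linarith : a - p < 0)] at l1 ⊢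
  rw [abs_of_pos (by linarith : 0 < b - p)] at l2
  have himg : S '' Set.Ioo a b = Set.Ioo (S a) (S b) := by
    apply Set.Subset.antisymm
    · rintro _ ⟨x, ⟨hx1, hx2⟩, rfl⟩
      have h3 := hexp a ha x ⟨hx1.le, hx2.le⟩ hx1.le
      have h4 := hexp x ⟨hx1.le, hx2.le⟩ b hb hx2.le
      constructor <;> linarith
    · exact intermediate_value_Ioo hab.le fun x hx => (hS x hx).continuousWithinAt
  refine ⟨by linarith, ?_, himg, ?_⟩
  · rw [abs_of_neg (by linarith)]
    linarith
  · rw [himg]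
    rintro y ⟨hy1, hy2⟩
    simp only [Set.mem_union, Metric.mem_ball, Real.dist_eq, abs_lt]
    rcases le_or_gt y a with hya | hya
    · exact Or.inl (Or.inl ⟨by linarith, by linarith⟩)
    · rcases lt_or_ge y b with hyb | hyb
      · exact Or.inl (Or.inr ⟨by linarith, by linarith⟩)
      · exact Or.inr ⟨by linarith, by linarith⟩
end

section
/- Let (X, d) be a compact metric space and μ a Borel probability measure on X satisfying the thin annuli assumption with constants C₀, α₀, r₀ > 0. Let (M_k) be a sequence in (0,1] converging to 0, let r_k : X → [0,∞) be 1-Lipschitz with μ(B(x, r_k(x))) = M_k for all x in the support of μ, let T : X → X be measurable, set E_k = {x ∈ X : T^k x ∈ B(x, r_k(x))}, and suppose |μ(E_k) − M_k| ≤ C₀ e^{−η₀ k} for some η₀ > 0 and all k. Fix η > 0 and define Z_k = {(x, y) ∈ X × X : y ∈ B(x, r_k(x))} and f_k(x, y) = max{0, 1 − e^{ηk} · dist((x, y), Z_k)}, where X × X carries the max metric. Then there exist constants C > 0 and η' > 0 (one may take η' = min{η₀, α₀η}) such that for all sufficiently large k: (i) 1_{B(x, r_k(x))}(y) ≤ f_k(x,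 y) ≤ 1 for all x, y; (ii) f_k is Lipschitz with ‖f_k‖_Lip ≤ C e^{ηk}; (iii) |∫_X f_k(x, y) dμ(y) − μ(E_k)| ≤ C e^{−η' k} for every x in the support of μ. -/
/-!
Write `δ = e^{-ηk}`. If `f_k(x, y) > 0`, then some `(x', y') ∈ Z_k` is `δ`-close to `(x, y)`, and since
`r_k` is 1-Lipschitz, `d(x, y) < r_k(x) + 3δ`. Hence `f_k(x, ·)` lies between the indicators of the
balls of radius `r_k(x)` and `r_k(x) + 3δ`, and `∫ f_k(x, ·) dμ` exceeds `M_k` by at most the measure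
of the annulus between them (`integral_bump_sub_le`).

The thin annuli assumption bounds this annulus directly only if `3δ ≤ r_k(x) ≤ r₀`. The upper bound
holds for all large `k`, uniformly over the support, because balls of radius `r₀` centred in the
support have measure bounded below by compactness (`exists_ball_lower_bound`) while `M_k → 0`.
When `r_k(x) < 3δ`, the annulus is covered by dyadic annuli around `x`, whose measures
sum to a geometric series (`annulus_le`); here `r_k(x) > 0` because `M_k > 0`.
The remaining error `|M_k - μ(E_k)|` is exponentially small by hypothesis.
-/

open MeasureTheory Set Filter

/-- The (topological) support of a measure on a metric space. -/
def msupport {X : Type*} [PseudoMetricSpace X] [MeasurableSpace X]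
    (μ : Measure X) : Set X :=
  {x : X | ∀ r : ℝ, 0 < r → 0 < μ (Metric.ball x r)}

/-- Summing dyadic thin annuli: the constant `C₀ / (1 - 2^{-α})` is the fixed point of
`A ↦ C₀ + A 2^{-α}`, which is what the induction on the number of annuli needs. -/
lemma dyadic_annulus_le {X : Type*} [MetricSpace X] [MeasurableSpace X]
    (μ : Measure X) [IsProbabilityMeasure μ] {C₀ α r₀ : ℝ} (hC₀ : 0 < C₀) (hα : 0 < α) {x : X}
    (h : ∀ (ε r : ℝ), 0 < ε → ε ≤ r → r ≤ r₀ →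
      (μ (Metric.ball x (r + ε) \ Metric.ball x r)).toReal ≤ C₀ * ε ^ α)
    (n : ℕ) : ∀ ρ : ℝ, 0 < ρ → ρ ≤ r₀ →
      (μ (Metric.ball x (ρ + ρ) \ Metric.ball x ((ρ + ρ) / 2 ^ n))).toReal
        ≤ C₀ / (1 - (1 / 2 : ℝ) ^ α) * ρ ^ α := by
  have hq : (1 / 2 : ℝ) ^ α < 1 := Real.rpow_lt_one (by norm_num) (by norm_num) hα
  have hq' : 0 < 1 - (1 / 2 : ℝ) ^ α := by linarith
  induction n with
  | zero =>
    intro ρ hρ _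
    simp only [pow_zero, div_one, sdiff_self, measure_empty, ENNReal.toReal_zero]
    positivity
  | succ n ih =>
    intro ρ hρ hρr
    have h1 := h ρ ρ hρ le_rfl hρr
    have h2 := ih (ρ / 2) (by positivity) (by linarith)
    have hsub : Metric.ball x (ρ + ρ) \ Metric.ball x ((ρ + ρ) / 2 ^ (n + 1)) ⊆
        (Metric.ball x (ρ + ρ) \ Metric.ball x ρ) ∪
        (Metric.ball x (ρ / 2 + ρ / 2) \ Metric.ball x ((ρ / 2 + ρ / 2) / 2 ^ n)) := by
      have e : (ρ + ρ) / 2 ^ (n + 1) = (ρ / 2 + ρ / 2) / 2 ^ n := by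
        rw [pow_succ]; field_simp
      rw [e, add_halves]
      intro y hy
      by_cases hyρ : y ∈ Metric.ball x ρ
      · exact Or.inr ⟨hyρ, hy.2⟩
      · exact Or.inl ⟨hy.1, hyρ⟩
    have h3 := (measureReal_mono (μ := μ) hsub).trans (measureReal_union_le _ _)
    simp only [measureReal_def] at h3
    have e : (ρ / 2) ^ α = (1 / 2 : ℝ) ^ α * ρ ^ α := by
      rw [← Real.mul_rpow (by norm_num) hρ.le]; congr 1; ring
    rw [e] at h2
    refine h3.trans ((add_le_add h1 h2).trans (le_of_eq ?_))
    field_simp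
    ring

/-- Thin annuli bound without the constraint that the thickness be at most the inner radius. -/
lemma annulus_le {X : Type*} [MetricSpace X] [MeasurableSpace X]
    (μ : Measure X) [IsProbabilityMeasure μ] {C₀ α r₀ : ℝ} (hC₀ : 0 < C₀) (hα : 0 < α) {x : X}
    (h : ∀ (ε r : ℝ), 0 < ε → ε ≤ r → r ≤ r₀ →
      (μ (Metric.ball x (r + ε) \ Metric.ball x r)).toReal ≤ C₀ * ε ^ α)
    {ε r : ℝ} (hε : 0 < ε) (hεr : ε ≤ r₀) (hr : 0 < r) (hrr : r ≤ r₀) :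
    (μ (Metric.ball x (r + ε) \ Metric.ball x r)).toReal
      ≤ C₀ / (1 - (1 / 2 : ℝ) ^ α) * ε ^ α := by
  have hq : (1 / 2 : ℝ) ^ α < 1 := Real.rpow_lt_one (by norm_num) (by norm_num) hα
  have hq0 : 0 < (1 / 2 : ℝ) ^ α := by positivity
  rcases le_total ε r with hle | hle
  · refine (h ε r hε hle hrr).trans ?_
    gcongr
    rw [le_div_iff₀ (by linarith)]
    nlinarith
  · obtain ⟨n, hn⟩ := pow_unbounded_of_one_lt ((ε + ε) / r) (one_lt_two)
    refine le_trans ?_ (dyadic_annulus_le μ hC₀ hα h n ε hε hεr)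
    refine measureReal_mono (μ := μ) (sdiff_subset_sdiff (Metric.ball_subset_ball (by linarith))
      (Metric.ball_subset_ball ?_))
    rw [div_lt_iff₀ hr] at hn
    rw [div_le_iff₀ (by positivity)]
    linarith

lemma exists_ball_lower_bound {X : Type*} [MetricSpace X] [CompactSpace X] [MeasurableSpace X]
    (μ : Measure X) [IsProbabilityMeasure μ] {r₀ : ℝ} (hr₀ : 0 < r₀) :
    ∃ m : ℝ, 0 < m ∧ ∀ x ∈ msupport μ, m ≤ (μ (Metric.ball x r₀)).toReal := by
  obtain ⟨t, -, htf, ht⟩ := (isCompact_univ (X := X)).finite_cover_balls (half_pos hr₀)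
  -- The minimum over the finitely many covering balls of positive measure.
  have hfin : (t ∩ {c | 0 < (μ (Metric.ball c (r₀ / 2))).toReal}).Finite := htf.inter_of_left _
  obtain ⟨m, hm, hmt⟩ : ∃ m : ℝ, 0 < m ∧
      ∀ c ∈ t ∩ {c | 0 < (μ (Metric.ball c (r₀ / 2))).toReal},
        m ≤ (μ (Metric.ball c (r₀ / 2))).toReal := by
    rcases (t ∩ {c | 0 < (μ (Metric.ball c (r₀ / 2))).toReal}).eq_empty_or_nonempty with he | hne
    · exact ⟨1, one_pos, by simp [he]⟩
    · obtain ⟨c, hc, hmin⟩ := Set.exists_min_image _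
        (fun c => (μ (Metric.ball c (r₀ / 2))).toReal) hfin hne
      exact ⟨_, hc.2, hmin⟩
  refine ⟨m, hm, fun x hx => ?_⟩
  obtain ⟨c, hc, hxc⟩ := mem_iUnion₂.1 (ht (mem_univ x))
  rw [Metric.mem_ball] at hxc
  have hpos : 0 < (μ (Metric.ball c (r₀ / 2))).toReal := by
    refine ENNReal.toReal_pos (ne_of_gt ?_) (measure_ne_top _ _)
    refine (hx (r₀ / 2 - dist x c) (by linarith)).trans_le (measure_mono ?_)
    exact Metric.ball_subset_ball' (by linarith)
  refine (hmt c ⟨hc, hpos⟩).trans (measureReal_mono (μ := μ) (Metric.ball_subset_ball' ?_))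
  rw [dist_comm]; linarith

/-- The bump `max 0 (1 - L dist(·, Z))` is Lipschitz with constant equal to its slope `L`. -/
lemma lipschitzWith_bump {Y : Type*} [PseudoMetricSpace Y] (Z : Set Y) {L : ℝ} (hL : 0 ≤ L) :
    LipschitzWith (Real.toNNReal L) (fun p : Y => max 0 (1 - L * Metric.infDist p Z)) := by
  refine LipschitzWith.const_max (LipschitzWith.of_dist_le_mul fun p q => ?_) 0
  have h := (Metric.lipschitz_infDist_pt Z).dist_le_mul p q
  rw [NNReal.coe_one, one_mul, Real.dist_eq] at h
  rw [Real.dist_eq, Real.coe_toNNReal L hL,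
    show 1 - L * Metric.infDist p Z - (1 - L * Metric.infDist q Z)
      = -(L * (Metric.infDist p Z - Metric.infDist q Z)) by ring, abs_neg, abs_mul, abs_of_nonneg hL]
  gcongr

lemma bump_le_one {Y : Type*} [PseudoMetricSpace Y] (Z : Set Y) {L : ℝ} (hL : 0 ≤ L) (p : Y) :
    max 0 (1 - L * Metric.infDist p Z) ≤ 1 := by
  have := mul_nonneg hL (Metric.infDist_nonneg (x := p) (s := Z))
  exact max_le zero_le_one (by linarith)

lemma lipNorm_bump_le {Y : Type*} [PseudoMetricSpace Y] (Z : Set Y) {L : ℝ} (hL : 0 ≤ L) :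
    lipNorm (fun p : Y => max 0 (1 - L * Metric.infDist p Z)) ≤ 1 + L := by
  refine add_le_add (Real.iSup_le (fun p => ?_) zero_le_one) ?_
  · rw [abs_of_nonneg (le_max_left _ _)]
    exact bump_le_one Z hL p
  · exact csInf_le ⟨0, fun K hK => hK.1⟩ ⟨hL, lipschitzWith_bump Z hL⟩

lemma indicator_le_bump {X : Type*} [MetricSpace X] (ρ : X → ℝ) (L : ℝ) (x y : X) :
    (Metric.ball x (ρ x)).indicator (fun _ => (1 : ℝ)) y ≤
      max 0 (1 - L * Metric.infDist (x, y) {p : X × X | p.2 ∈ Metric.ball p.1 (ρ p.1)}) := by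
  by_cases hy : y ∈ Metric.ball x (ρ x)
  · rw [indicator_of_mem hy, Metric.infDist_zero_of_mem (by exact hy)]
    simp
  · rw [indicator_of_notMem hy]
    exact le_max_left _ _

/-- Positivity of `ρ x` makes `Z` nonempty; on the empty set `infDist` is `0`
and the bump would be identically `1`. -/
lemma bump_le_indicator {X : Type*} [MetricSpace X] {ρ : X → ℝ} (hρ : LipschitzWith 1 ρ)
    {L : ℝ} (hL : 0 < L) {x : X} (hx : 0 < ρ x) (y : X) :
    max 0 (1 - L * Metric.infDist (x, y) {p : X × X | p.2 ∈ Metric.ball p.1 (ρ p.1)}) ≤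
      (Metric.ball x (ρ x + 3 * L⁻¹)).indicator (fun _ => (1 : ℝ)) y := by
  by_cases hy : y ∈ Metric.ball x (ρ x + 3 * L⁻¹)
  · rw [indicator_of_mem hy]
    exact bump_le_one _ hL.le _
  · rw [indicator_of_notMem hy]
    refine max_le le_rfl ?_
    by_contra! hlt
    apply hy
    have hne : {p : X × X | p.2 ∈ Metric.ball p.1 (ρ p.1)}.Nonempty :=
      ⟨(x, x), Metric.mem_ball_self hx⟩
    have hlt' : Metric.infDist (x, y) {p : X × X | p.2 ∈ Metric.ball p.1 (ρ p.1)} < L⁻¹ := by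
      rw [← one_div, lt_div_iff₀ hL]
      linarith
    obtain ⟨⟨x', y'⟩, hz, hd⟩ := (Metric.infDist_lt_iff hne).1 hlt'
    have hz' : dist y' x' < ρ x' := hz
    rw [Prod.dist_eq, max_lt_iff] at hd
    have h1 : dist x x' < L⁻¹ := hd.1
    have h2 : dist y y' < L⁻¹ := hd.2
    have h3 := hρ.dist_le_mul x' x
    rw [NNReal.coe_one, one_mul, Real.dist_eq, dist_comm] at h3
    have h4 := le_abs_self (ρ x' - ρ x)
    have h5 := dist_triangle4 y y' x' x
    rw [dist_comm x' x] at h5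
    rw [Metric.mem_ball]
    linarith

lemma integral_bump_sub_le {X : Type*} [MetricSpace X] [CompactSpace X] [MeasurableSpace X]
    [BorelSpace X] (μ : Measure X) [IsProbabilityMeasure μ] {ρ : X → ℝ} (hρ : LipschitzWith 1 ρ)
    {L : ℝ} (hL : 0 < L) {x : X} (hx : 0 < ρ x) :
    |(∫ y, max 0 (1 - L * Metric.infDist (x, y)
        {p : X × X | p.2 ∈ Metric.ball p.1 (ρ p.1)}) ∂μ) - (μ (Metric.ball x (ρ x))).toReal|
      ≤ (μ (Metric.ball x (ρ x + 3 * L⁻¹) \ Metric.ball x (ρ x))).toReal := by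
  have hind : ∀ s : ℝ, Integrable ((Metric.ball x s).indicator (fun _ => (1 : ℝ))) μ := fun s =>
    (integrable_const (1 : ℝ)).indicator Metric.isOpen_ball.measurableSet
  have hcont : Continuous (fun y => max 0 (1 - L * Metric.infDist (x, y)
      {p : X × X | p.2 ∈ Metric.ball p.1 (ρ p.1)})) :=
    (lipschitzWith_bump _ hL.le).continuous.comp (by fun_prop : Continuous fun y : X => (x, y))
  have hint := hcont.integrable_of_hasCompactSupport (μ := μ) (HasCompactSupport.of_compactSpace _)
  have h1 := integral_mono (hind _) hint (indicator_le_bump ρ L x)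
  have h2 := integral_mono hint (hind _) (bump_le_indicator hρ hL hx)
  have hI : ∀ s : ℝ, ∫ y, (Metric.ball x s).indicator (fun _ => (1 : ℝ)) y ∂μ
      = μ.real (Metric.ball x s) := fun s => by
    rw [integral_indicator Metric.isOpen_ball.measurableSet]; simp
  rw [hI] at h1 h2
  have h3 := measureReal_sdiff (μ := μ) (Metric.ball_subset_ball (x := x)
    (show ρ x ≤ ρ x + 3 * L⁻¹ by have := inv_pos.2 hL; linarith))
    Metric.isOpen_ball.measurableSet
  simp only [measureReal_def] at h1 h2 h3
  rw [abs_of_nonneg (by linarith), h3]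
  linarith

/-- The Lipschitz approximations `f_k` of the indicator of the recurrence target:
`f_k(x,y) = max {0, 1 − e^{ηk} dist((x,y), Z_k)}` dominates
`1_{B(x, r_k(x))}(y)`, has Lipschitz norm `≤ C e^{ηk}`, and for `x` in the
support of `μ`, `∫ f_k(x, y) dμ(y) = μ(E_k) + O(e^{−η' k})`. -/
theorem lipschitz_approximation
    {X : Type*} [MetricSpace X] [CompactSpace X] [MeasurableSpace X] [BorelSpace X]
    (μ : Measure X) [IsProbabilityMeasure μ]
    -- thin annuli assumption
    (C₀ α₀ r₀ : ℝ) (hC₀ : 0 < C₀) (hα₀ : 0 < α₀) (hr₀ : 0 < r₀)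
    (hannuli : ∀ (x : X) (ε r : ℝ), 0 < ε → ε ≤ r → r ≤ r₀ →
      (μ (Metric.ball x (r + ε) \ Metric.ball x r)).toReal ≤ C₀ * ε ^ α₀)
    -- the sequence (M_k) and the radii r_k
    (M : ℕ → ℝ) (hMpos : ∀ k, 0 < M k) (hM1 : ∀ k, M k ≤ 1)
    (hMlim : Tendsto M atTop (nhds 0))
    (r : ℕ → X → ℝ) (hrnn : ∀ k x, 0 ≤ r k x) (hrlip : ∀ k, LipschitzWith 1 (r k))
    (hrmeas : ∀ k, ∀ x ∈ msupport μ,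
      (μ (Metric.ball x (r k x))).toReal = M k)
    (T : X → X) (hT : Measurable T)
    (η₀ : ℝ) (hη₀ : 0 < η₀)
    (hEk : ∀ k : ℕ,
      |(μ {x : X | T^[k] x ∈ Metric.ball x (r k x)}).toReal - M k|
        ≤ C₀ * Real.exp (-η₀ * k))
    (η : ℝ) (hη : 0 < η) :
    ∃ C η' : ℝ, 0 < C ∧ 0 < η' ∧ ∃ k₀ : ℕ, ∀ k : ℕ, k₀ ≤ k →
      ((∀ x y : X,
          (Metric.ball x (r k x)).indicator (fun _ => (1:ℝ)) y
              ≤ max 0 (1 - Real.exp (η * k)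
                  * Metric.infDist (x, y) {p : X × X | p.2 ∈ Metric.ball p.1 (r k p.1)})
            ∧ max 0 (1 - Real.exp (η * k)
                  * Metric.infDist (x, y) {p : X × X | p.2 ∈ Metric.ball p.1 (r k p.1)})
              ≤ 1) ∧
        ((∃ K, LipschitzWith K (fun p : X × X => max 0 (1 - Real.exp (η * k)
              * Metric.infDist p {q : X × X | q.2 ∈ Metric.ball q.1 (r k q.1)}))) ∧
          lipNorm (fun p : X × X => max 0 (1 - Real.exp (η * k)
              * Metric.infDist p {q : X × X | q.2 ∈ Metric.ball q.1 (r k q.1)}))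
            ≤ C * Real.exp (η * k)) ∧
        (∀ x ∈ msupport μ,
          |(∫ y, max 0 (1 - Real.exp (η * k)
                * Metric.infDist (x, y) {p : X × X | p.2 ∈ Metric.ball p.1 (r k p.1)}) ∂μ)
              - (μ {z : X | T^[k] z ∈ Metric.ball z (r k z)}).toReal|
            ≤ C * Real.exp (-η' * k))) := by
  obtain ⟨m, hm, hmb⟩ := exists_ball_lower_bound μ hr₀
  have hA : 0 < C₀ / (1 - (1 / 2 : ℝ) ^ α₀) :=
    div_pos hC₀ (sub_pos.2 (Real.rpow_lt_one (by norm_num) (by norm_num) hα₀))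
  set A := C₀ / (1 - (1 / 2 : ℝ) ^ α₀) with hAdef
  have hδ : Tendsto (fun k : ℕ => 3 * (Real.exp (η * k))⁻¹) atTop (nhds 0) := by
    have h : Tendsto (fun k : ℕ => Real.exp (η * k)) atTop atTop :=
      Real.tendsto_exp_atTop.comp (tendsto_natCast_atTop_atTop.const_mul_atTop hη)
    simpa using h.inv_tendsto_atTop.const_mul 3
  obtain ⟨k₀, hk₀⟩ := eventually_atTop.1
    ((hMlim.eventually (gt_mem_nhds hm)).and (hδ.eventually (gt_mem_nhds hr₀)))
  have h3α : (0 : ℝ) < 3 ^ α₀ := by positivity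
  refine ⟨2 + A * 3 ^ α₀ + C₀, min η₀ (α₀ * η), by positivity, by positivity, k₀,
    fun k hk => ⟨fun x y => ⟨indicator_le_bump (r k) _ x y, bump_le_one _ (Real.exp_pos _).le _⟩,
      ⟨⟨_, lipschitzWith_bump _ (Real.exp_pos _).le⟩, ?_⟩, fun x hx => ?_⟩⟩
  · refine (lipNorm_bump_le _ (Real.exp_pos _).le).trans ?_
    have h1 : 1 ≤ Real.exp (η * k) := Real.one_le_exp (by positivity)
    have h2 : 0 ≤ (A * 3 ^ α₀ + C₀) * Real.exp (η * k) := by positivity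
    linarith
  · obtain ⟨hMk, hδk⟩ := hk₀ k hk
    have hrpos : 0 < r k x := by
      refine (hrnn k x).lt_of_ne fun h0 => ?_
      have h := hrmeas k x hx
      rw [← h0, Metric.ball_zero, measure_empty, ENNReal.toReal_zero] at h
      exact (hMpos k).ne h
    have hrle : r k x ≤ r₀ := by
      by_contra! hlt
      have h1 := measureReal_mono (μ := μ) (Metric.ball_subset_ball (x := x) hlt.le)
      simp only [measureReal_def] at h1
      rw [hrmeas k x hx] at h1
      linarith [hmb x hx]
    have h1 := integral_bump_sub_le μ (hrlip k) (Real.exp_pos (η * k)) hrpos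
    have h2 := annulus_le μ hC₀ hα₀ (hannuli x)
      (by positivity : 0 < 3 * (Real.exp (η * k))⁻¹) hδk.le hrpos hrle
    rw [hrmeas k x hx] at h1
    have h3 := hEk k
    rw [abs_sub_comm] at h3
    have e : (3 * (Real.exp (η * k))⁻¹) ^ α₀ = 3 ^ α₀ * Real.exp (-(α₀ * η) * k) := by
      rw [Real.mul_rpow (by norm_num) (by positivity), ← Real.exp_neg, ← Real.exp_mul]
      congr 2; ring
    rw [e, ← hAdef, ← mul_assoc] at h2
    have hk0 : (0 : ℝ) ≤ k := Nat.cast_nonneg k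
    have g1 : Real.exp (-(α₀ * η) * k) ≤ Real.exp (-min η₀ (α₀ * η) * k) := by
      gcongr; exact min_le_right _ _
    have g2 : Real.exp (-η₀ * k) ≤ Real.exp (-min η₀ (α₀ * η) * k) := by
      gcongr; exact min_le_left _ _
    have g3 := mul_le_mul_of_nonneg_left g1 (by positivity : 0 ≤ A * 3 ^ α₀)
    have g4 := mul_le_mul_of_nonneg_left g2 hC₀.le
    have g5 := Real.exp_pos (-min η₀ (α₀ * η) * k)
    refine (abs_sub_le _ (M k) _).trans ?_
    linarith
end

section
/- Let (X, d) be a compact metric space and μ a Borel probability measure on X satisfying the Frostman assumption and the thin annuli assumption. Then there exists M₀ > 0 such that for every M ∈ (0, M₀], the function r_M(x) = inf{r ≥ 0 : μ(B(x, r)) ≥ M} satisfies μ(B(x, r_M(x))) = M for every x in the support of μ, and x ↦ r_M(x) is Lipschitz continuous on X with Lipschitz constant 1. -/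
/-!
Fix `x` and put `R = r_M(x)`. Every ball about `x` of radius `< R` has mass `< M`, and every ball of
radius `> R` has mass at least `M`. Continuity of `μ` from below along increasing open balls gives
`μ(B(x, R)) ≤ M`. The Frostman bound forces `R > 0`, and for `R ≤ r₀` the thin annuli bound gives
`M ≤ μ(B(x, R + ε)) ≤ μ(B(x, R)) + Ca ε ^ α₀`; letting `ε → 0` yields equality.

The bound `R ≤ r₀` is uniform over the support: cover `X` by finitely many balls of radius `r₀ / 2`.
A covering ball meeting the support has positive mass and lies in `B(x, r₀)` for every `x` in it,
so `M₀` may be any number in `(0, 1]` below the finitely many positive masses that occur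
(`exists_uniform_mass`).

The Lipschitz bound follows from `B(y, r) ⊆ B(x, r + d(x, y))`, which shifts the set of
admissible radii; it holds on all of `X` as soon as `M ≤ 1`, which makes that set nonempty.
-/

open MeasureTheory Set Filter

/-- The radius `r_M(x) = inf {r ≥ 0 : μ(B(x,r)) ≥ M}`. -/
noncomputable def rad {X : Type*} [PseudoMetricSpace X] [MeasurableSpace X]
    (μ : Measure X) (M : ℝ) (x : X) : ℝ :=
  sInf {r : ℝ | 0 ≤ r ∧ M ≤ (μ (Metric.ball x r)).toReal}

section RadiusFunction

open scoped Topology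

variable {X : Type*} [MetricSpace X] [MeasurableSpace X]

lemma rad_bddBelow (μ : Measure X) (M : ℝ) (x : X) :
    BddBelow {r : ℝ | 0 ≤ r ∧ M ≤ (μ (Metric.ball x r)).toReal} :=
  ⟨0, fun _ hr => hr.1⟩

lemma rad_le (μ : Measure X) {M : ℝ} {x : X} {r : ℝ} (hr : 0 ≤ r)
    (h : M ≤ (μ (Metric.ball x r)).toReal) : rad μ M x ≤ r :=
  csInf_le (rad_bddBelow μ M x) ⟨hr, h⟩

/-- Some radius is admissible in the infimum defining `rad`, so that the infimum is not the junk
value `sInf ∅ = 0`. -/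
lemma rad_nonempty [CompactSpace X] (μ : Measure X) [IsProbabilityMeasure μ] {M : ℝ} (hM : M ≤ 1)
    (x : X) : {r : ℝ | 0 ≤ r ∧ M ≤ (μ (Metric.ball x r)).toReal}.Nonempty := by
  obtain ⟨r, hr⟩ := (isCompact_univ (X := X)).isBounded.subset_ball_lt 0 x
  refine ⟨r, hr.1.le, ?_⟩
  rw [univ_subset_iff.1 hr.2]
  simpa using hM

lemma rad_lipschitz [CompactSpace X] (μ : Measure X) [IsProbabilityMeasure μ] {M : ℝ}
    (hM : M ≤ 1) : LipschitzWith 1 (rad μ M) := by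
  refine LipschitzWith.of_le_add fun x y => ?_
  rw [← sub_le_iff_le_add]
  refine le_csInf (rad_nonempty μ hM y) fun r hr => ?_
  rw [sub_le_iff_le_add]
  refine rad_le μ (add_nonneg hr.1 dist_nonneg) (hr.2.trans ?_)
  refine ENNReal.toReal_mono (measure_ne_top _ _) (measure_mono ?_)
  refine Metric.ball_subset_ball' ?_
  rw [dist_comm]

/-- Balls of a fixed radius centred in the support of a measure on a compact space have mass
bounded away from `0`. -/
lemma exists_uniform_mass [CompactSpace X] (μ : Measure X) [IsProbabilityMeasure μ] {ρ : ℝ}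
    (hρ : 0 < ρ) : ∃ m : ℝ, 0 < m ∧ m ≤ 1 ∧
      ∀ x ∈ msupport μ, m ≤ (μ (Metric.ball x ρ)).toReal := by
  obtain ⟨t, -, htf, ht⟩ := (isCompact_univ (X := X)).finite_cover_balls (half_pos hρ)
  have hev : ∀ᶠ m : ℝ in 𝓝[>] 0, ∀ i ∈ t, 0 < (μ (Metric.ball i (ρ / 2))).toReal →
      m ≤ (μ (Metric.ball i (ρ / 2))).toReal := by
    refine (eventually_all_finite htf).2 fun i _ => ?_
    by_cases h : 0 < (μ (Metric.ball i (ρ / 2))).toReal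
    · filter_upwards [nhdsWithin_le_nhds (Iic_mem_nhds h)] with m hm _ using hm
    · exact Eventually.of_forall fun m h' => absurd h' h
  obtain ⟨m, hm, hm0, hm1⟩ := (hev.and
    (eventually_mem_set.2 (Ioc_mem_nhdsGT (zero_lt_one (α := ℝ))))).exists
  refine ⟨m, hm0, hm1, fun x hx => ?_⟩
  obtain ⟨i, hi, hxi⟩ := mem_iUnion₂.1 (ht (mem_univ x))
  obtain ⟨δ, hδ, hsub⟩ := Metric.isOpen_iff.1 Metric.isOpen_ball x hxi
  have hpos : 0 < (μ (Metric.ball i (ρ / 2))).toReal :=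
    ENNReal.toReal_pos ((hx δ hδ).trans_le (measure_mono hsub)).ne' (measure_ne_top _ _)
  refine (hm i hi hpos).trans (ENNReal.toReal_mono (measure_ne_top _ _) (measure_mono ?_))
  refine Metric.ball_subset_ball' ?_
  rw [Metric.mem_ball, dist_comm] at hxi
  linarith

/-- Open balls are increasing unions of smaller balls, hence the open ball of radius `r_M(x)` has
mass at most `M`. -/
lemma measure_ball_rad_le (μ : Measure X) [IsProbabilityMeasure μ] {M : ℝ} (x : X) :
    μ (Metric.ball x (rad μ M x)) ≤ ENNReal.ofReal M := by
  obtain ⟨u, hu, hlt, hlim⟩ := exists_seq_strictMono_tendsto (rad μ M x)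
  have hball : Metric.ball x (rad μ M x) = ⋃ n, Metric.ball x (u n) := by
    ext y
    simp only [Metric.mem_ball, mem_iUnion]
    exact ⟨fun h => (hlim.eventually (lt_mem_nhds h)).exists,
      fun ⟨n, hn⟩ => hn.trans (hlt n)⟩
  have hmono : Monotone fun n => Metric.ball x (u n) :=
    fun _ _ h => Metric.ball_subset_ball (hu.monotone h)
  rw [hball, hmono.measure_iUnion]
  refine iSup_le fun n => ?_
  rcases lt_or_ge (u n) 0 with h0 | h0
  · simp [Metric.ball_eq_empty.2 h0.le]
  · have h : (μ (Metric.ball x (u n))).toReal < M := by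
      by_contra! h
      exact absurd (rad_le μ h0 h) (not_le.2 (hlt n))
    exact (ENNReal.le_ofReal_iff_toReal_le (measure_ne_top _ _)
      (ENNReal.toReal_nonneg.trans h.le)).2 h.le

lemma le_measure_ball_of_rad_lt [CompactSpace X] (μ : Measure X) [IsProbabilityMeasure μ] {M : ℝ}
    (hM : M ≤ 1) {x : X} {r : ℝ} (hr : rad μ M x < r) : M ≤ (μ (Metric.ball x r)).toReal := by
  obtain ⟨r', hr', hlt⟩ := exists_lt_of_csInf_lt (rad_nonempty μ hM x) hr
  exact hr'.2.trans
    (ENNReal.toReal_mono (measure_ne_top _ _) (measure_mono (Metric.ball_subset_ball hlt.le)))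

lemma tendsto_const_mul_rpow_zero (C : ℝ) {a : ℝ} (ha : 0 < a) :
    Tendsto (fun r : ℝ => C * r ^ a) (𝓝[>] 0) (𝓝 0) := by
  have h : Tendsto (fun r : ℝ => C * r ^ a) (𝓝 0) (𝓝 (C * 0 ^ a)) :=
    ((Real.continuousAt_rpow_const 0 a (Or.inr ha.le)).tendsto).const_mul C
  rw [Real.zero_rpow ha.ne', mul_zero] at h
  exact h.mono_left nhdsWithin_le_nhds

/-- The Frostman bound rules out `r_M(x) = 0`, since it makes the mass of small balls about `x`
fall below `M`. -/
lemma rad_pos [CompactSpace X] (μ : Measure X) [IsProbabilityMeasure μ] {M : ℝ} (hM0 : 0 < M)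
    (hM : M ≤ 1) (x : X) {C s ρ : ℝ} (hs : 0 < s) (hρ : 0 < ρ)
    (hfrost : ∀ r : ℝ, 0 < r → r ≤ ρ → (μ (Metric.ball x r)).toReal ≤ C * r ^ s) :
    0 < rad μ M x := by
  obtain ⟨r, hr, hr0, hrρ⟩ := (((tendsto_const_mul_rpow_zero C hs).eventually
    (gt_mem_nhds hM0)).and (eventually_mem_set.2 (Ioc_mem_nhdsGT hρ))).exists
  refine hr0.trans_le ?_
  by_contra! h
  exact absurd ((le_measure_ball_of_rad_lt μ hM h).trans (hfrost r hr0 hrρ)) (not_le.2 hr)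

end RadiusFunction

/-- Under the Frostman and thin annuli assumptions, for all sufficiently small
`M > 0` the radius function `r_M` satisfies `μ(B(x, r_M(x))) = M` on the support
of `μ`, and `r_M` is `1`-Lipschitz. -/
theorem rad_wellDefined_and_lipschitz
    {X : Type*} [MetricSpace X] [CompactSpace X] [MeasurableSpace X] [BorelSpace X]
    (μ : Measure X) [IsProbabilityMeasure μ]
    -- Frostman assumption
    (Cf s rf : ℝ) (hCf : 0 < Cf) (hs : 0 < s) (hrf : 0 < rf)
    (hfrost : ∀ (x : X) (r : ℝ), 0 < r → r ≤ rf →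
      (μ (Metric.ball x r)).toReal ≤ Cf * r ^ s)
    -- thin annuli assumption
    (Ca α₀ r₀ : ℝ) (hCa : 0 < Ca) (hα₀ : 0 < α₀) (hr₀ : 0 < r₀)
    (hannuli : ∀ (x : X) (ε r : ℝ), 0 < ε → ε ≤ r → r ≤ r₀ →
      (μ (Metric.ball x (r + ε) \ Metric.ball x r)).toReal ≤ Ca * ε ^ α₀) :
    ∃ M₀ : ℝ, 0 < M₀ ∧ ∀ M : ℝ, 0 < M → M ≤ M₀ →
      (∀ x ∈ msupport μ, μ (Metric.ball x (rad μ M x)) = ENNReal.ofReal M) ∧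
      LipschitzWith 1 (rad μ M) := by
  obtain ⟨m, hm0, hm1, hm⟩ := exists_uniform_mass μ hr₀
  refine ⟨m, hm0, fun M hM0 hMm => ⟨fun x hx => ?_, rad_lipschitz μ (hMm.trans hm1)⟩⟩
  have hM1 : M ≤ 1 := hMm.trans hm1
  have hRpos : 0 < rad μ M x := rad_pos μ hM0 hM1 x hs hrf (hfrost x)
  have hRle : rad μ M x ≤ r₀ := rad_le μ hr₀.le (hMm.trans (hm x hx))
  refine le_antisymm (measure_ball_rad_le μ x) ?_
  rw [ENNReal.ofReal_le_iff_le_toReal (measure_ne_top _ _)]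
  -- `M ≤ μ(B(x, R)) + Ca ε ^ α₀` for all small `ε > 0`, where `R = rad μ M x`.
  have hlim := (tendsto_const_mul_rpow_zero Ca hα₀).const_add
    (μ (Metric.ball x (rad μ M x))).toReal
  rw [add_zero] at hlim
  refine ge_of_tendsto hlim ?_
  filter_upwards [self_mem_nhdsWithin, nhdsWithin_le_nhds (Iic_mem_nhds hRpos)] with ε hε0 hεR
  rw [mem_Ioi] at hε0
  have h1 := le_measure_ball_of_rad_lt μ hM1 (lt_add_of_pos_right (rad μ M x) hε0)
  have h2 := hannuli x ε (rad μ M x) hε0 hεR hRle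
  have h3 : (μ (Metric.ball x (rad μ M x + ε))).toReal ≤ (μ (Metric.ball x (rad μ M x))).toReal +
      (μ (Metric.ball x (rad μ M x + ε) \ Metric.ball x (rad μ M x))).toReal := by
    rw [← ENNReal.toReal_add (measure_ne_top _ _) (measure_ne_top _ _)]
    refine ENNReal.toReal_mono (by finiteness) ((measure_mono ?_).trans (measure_union_le _ _))
    rw [union_sdiff_self]
    exact subset_union_right
  linarith
end
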